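/- Let γ > −1. Suppose that for each n, {P_{k,n}^{(γ)} : 0 ≤ k ≤ n} is an orthonormal basis of V_n(W_γ) and, for each (i,j) ∈ {(1,1),(1,0),(0,1)}, {P_{k,n}^{(γ),i,j} : 0 ≤ k ≤ n} is an orthonormal basis of V_n(W_γ^{(i,j)}) (orthonormality with respect to integration against the respective weight on Ω). Set b^{(i,j)} := (a_{w^{(i,j)}}^γ / a_w^γ)^{1/2} and s(x,y) := (2xy, x²+y²−1). Then for every n ≥ 0: the 2n+1 polynomials ₁Q_{k,2n}(x,y) := P_{k,n}^{(γ)}(s(x,y)) (0 ≤ k ≤ n) and ₂Q_{k,2n}(x,y) := b^{(1,1)} (x²−y²) P_{k,n−1}^{(γ),1,1}(s(x,y)) (0 ≤ k ≤ n−1) form an orthonormal basis of V_{2n}(𝒲_γ), and the 2n+2 polynomials ₁Q_{k,2n+1}(x,y) := b^{(0,1)} (x+y) P_{k,n}^{(γ),0,1}(s(x,y)) (0 ≤ k ≤ n) and ₂Q_{k,2n+1}(x,y) := b^{(1,0)} (x−y) P_{k,n}^{(γ),1,0}(s(x,y)) (0 ≤ k ≤ n) form an orthonormal basis of V_{2n+1}(𝒲_γ),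 where orthogonality and orthonormality are with respect to ⟨f,g⟩ := ∫_{[−1,1]²} f g 𝒲_γ. -/

import Mathlib

open MeasureTheory Real Set Filter
open scoped ENNReal

noncomputable section

/-- The parabolic-type domain `Ω`, the image of the triangle `-1 < x < y < 1`
under `(x, y) ↦ (x + y, x y)`. -/
def omegaDom : Set (ℝ × ℝ) :=
  {q | ∃ x y : ℝ, -1 < x ∧ x < y ∧ y < 1 ∧ q = (x + y, x * y)}

/-- The square `[-1,1]²`. -/
def sqDom : Set (ℝ × ℝ) := Icc (-1 : ℝ) 1 ×ˢ Icc (-1 : ℝ) 1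

/-- The open triangle `-1 < x < y < 1`. -/
def triDom : Set (ℝ × ℝ) := {q | -1 < q.1 ∧ q.1 < q.2 ∧ q.2 < 1}

/-- The smaller root `x(u,v)` of `t² - u t + v = 0`. -/
def xRoot (q : ℝ × ℝ) : ℝ := (q.1 - Real.sqrt (q.1 ^ 2 - 4 * q.2)) / 2

/-- The larger root `y(u,v)` of `t² - u t + v = 0`. -/
def yRoot (q : ℝ × ℝ) : ℝ := (q.1 + Real.sqrt (q.1 ^ 2 - 4 * q.2)) / 2

/-- Evaluation of a two-variable polynomial at a point of `ℝ²`. -/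
def evalP (P : MvPolynomial (Fin 2) ℝ) (q : ℝ × ℝ) : ℝ :=
  MvPolynomial.eval ![q.1, q.2] P

/-- The space `V_n(W)` of orthogonal polynomials of degree `n` for the weight `W`
on the domain `D`: polynomials of exact total degree `n` orthogonal to all
polynomials of lower degree. -/
def Vpoly (D : Set (ℝ × ℝ)) (W : ℝ × ℝ → ℝ) (n : ℕ) : Set (MvPolynomial (Fin 2) ℝ) :=
  {P | P.totalDegree = n ∧ ∀ Q : MvPolynomial (Fin 2) ℝ, Q.totalDegree < n →
    (∫ q in D, evalP P q * evalP Q q * W q) = 0}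

/-- `Q 0, …, Q n` is an orthonormal basis of `V_n(W)` on `D`. -/
def isONBVn (D : Set (ℝ × ℝ)) (W : ℝ × ℝ → ℝ) (n : ℕ)
    (Q : ℕ → MvPolynomial (Fin 2) ℝ) : Prop :=
  (∀ k, k ≤ n → Q k ∈ Vpoly D W n) ∧
  (∀ k, k ≤ n → ∀ j, j ≤ n →
    (∫ q in D, evalP (Q k) q * evalP (Q j) q * W q) = if k = j then 1 else 0) ∧
  (∀ R ∈ Vpoly D W n, R ∈ Submodule.span ℝ (Q '' Set.Iic n))

/-- `K` is the reproducing kernel of `Π_n²` in `L²(W)` on the domain `D`: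
it is a polynomial function, for each fixed `x ∈ D` it is a polynomial of total
degree `≤ n` in the second variable, and it reproduces every polynomial of total
degree `≤ n`. -/
def IsRK (D : Set (ℝ × ℝ)) (W : ℝ × ℝ → ℝ) (n : ℕ) (K : ℝ × ℝ → ℝ × ℝ → ℝ) : Prop :=
  (∃ KP : MvPolynomial (Fin 4) ℝ,
    ∀ x y : ℝ × ℝ, K x y = MvPolynomial.eval ![x.1, x.2, y.1, y.2] KP) ∧
  (∀ x ∈ D, ∃ P : MvPolynomial (Fin 2) ℝ, P.totalDegree ≤ n ∧ ∀ y, K x y = evalP P y) ∧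
  (∀ P : MvPolynomial (Fin 2) ℝ, P.totalDegree ≤ n →
    ∀ x ∈ D, (∫ y in D, K x y * evalP P y * W y) = evalP P x)

/-- `p` is the sequence of orthonormal polynomials with respect to the weight `w`
on `[-1,1]`: `p n` has degree exactly `n`, positive leading coefficient, and the
`p n` are orthonormal in `L²(w)`. -/
def IsONPS (w : ℝ → ℝ) (p : ℕ → Polynomial ℝ) : Prop :=
  (∀ n, (p n).natDegree = n) ∧ (∀ n, 0 < (p n).leadingCoeff) ∧
  (∀ n m, (∫ x in Icc (-1:ℝ) 1, (p n).eval x * (p m).eval x * w x)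
    = if n = m then 1 else 0)

/-- The Christoffel–Darboux kernel `k_n(x,y) = ∑_{j=0}^n p_j(x) p_j(y)`. -/
def CDK (p : ℕ → Polynomial ℝ) (n : ℕ) (x y : ℝ) : ℝ :=
  ∑ j ∈ Finset.range (n + 1), (p j).eval x * (p j).eval y

/-- The Jacobi factor `J_{a,b}(x) = (1-x)^a (1+x)^b`. -/
def Jw (a b : ℝ) (x : ℝ) : ℝ := (1 - x) ^ a * (1 + x) ^ b

/-- The factor `J*_{a,b}(u,v) = (1-u+v)^a (1+u+v)^b` on `Ω`. -/
def JstarW (a b : ℝ) (q : ℝ × ℝ) : ℝ := (1 - q.1 + q.2) ^ a * (1 + q.1 + q.2) ^ b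

/-- Modulus of continuity of `ψ` on `[-1,1]`. -/
def modCont (ψ : ℝ → ℝ) (t : ℝ) : ℝ :=
  sSup {d : ℝ | ∃ x ∈ Icc (-1:ℝ) 1, ∃ y ∈ Icc (-1:ℝ) 1, |x - y| ≤ t ∧ d = |ψ x - ψ y|}

/-- The generalized Jacobi class `GJ`. -/
def IsGJ (w : ℝ → ℝ) : Prop :=
  ∃ (r : ℕ) (ψ : ℝ → ℝ) (γ₀ γ₁ : ℝ) (γs xs : Fin r → ℝ),
    -1 < γ₀ ∧ -1 < γ₁ ∧ (∀ i, -1 < γs i) ∧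
    StrictMono xs ∧ (∀ i, xs i ∈ Ioo (-1:ℝ) 1) ∧
    ContinuousOn ψ (Icc (-1:ℝ) 1) ∧ (∀ x ∈ Icc (-1:ℝ) 1, 0 < ψ x) ∧
    IntegrableOn (fun t => modCont ψ t / t) (Ioc (0:ℝ) 1) ∧
    (∀ x : ℝ, |x| ≤ 1 → w x = ψ x * (1 - x) ^ γ₀ * (1 + x) ^ γ₁ * ∏ i, |x - xs i| ^ γs i) ∧
    (∀ x : ℝ, 1 < |x| → w x = 0)

/-- The `L^p`-norm `‖f‖_{w,e}` on `[-1,1]` (as an extended nonnegative real). -/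
def lpnormI (w : ℝ → ℝ) (e : ℝ) (f : ℝ → ℝ) : ℝ≥0∞ :=
  (∫⁻ x in Icc (-1:ℝ) 1, ENNReal.ofReal (|f x| ^ e * w x)) ^ (1 / e)

/-- The `L^p`-norm `‖f‖_{W,e}` on a planar domain `D` (as an extended nonnegative real). -/
def lpnormD (D : Set (ℝ × ℝ)) (W : ℝ × ℝ → ℝ) (e : ℝ) (f : ℝ × ℝ → ℝ) : ℝ≥0∞ :=
  (∫⁻ q in D, ENNReal.ofReal (|f q| ^ e * W q)) ^ (1 / e)

/-- The operator `s_n^{i,j}(w; f, x)` built from the Christoffel–Darboux kernel of the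
orthonormal polynomials `pij` of the weight `J_{i,j} w`. -/
def snOp (w : ℝ → ℝ) (pij : ℕ → Polynomial ℝ) (i j : ℝ) (n : ℕ) (f : ℝ → ℝ) (x : ℝ) : ℝ :=
  Jw (i/2) (j/2) x * ∫ y in Icc (-1:ℝ) 1, f y * CDK pij n x y * Jw (i/2) (j/2) y * w y

/-- Substitution `(x, y) ↦ (2 x y, x² + y² - 1)` on two-variable polynomials. -/
def quadSub (P : MvPolynomial (Fin 2) ℝ) : MvPolynomial (Fin 2) ℝ :=
  MvPolynomial.aeval
    ![2 * MvPolynomial.X 0 * MvPolynomial.X 1,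
      MvPolynomial.X 0 ^ 2 + MvPolynomial.X 1 ^ 2 - 1] P

/-- A one-variable polynomial viewed as a polynomial in the first variable. -/
def polyX (q : Polynomial ℝ) : MvPolynomial (Fin 2) ℝ :=
  Polynomial.aeval (MvPolynomial.X 0) q

/-- A one-variable polynomial viewed as a polynomial in the second variable. -/
def polyY (q : Polynomial ℝ) : MvPolynomial (Fin 2) ℝ :=
  Polynomial.aeval (MvPolynomial.X 1) q

/-!
Every polynomial on the square splits uniquely into four parts of the form
`(x - y)^i (x + y)^j A(2xy, x² + y² - 1)` with `i, j ∈ {0, 1}`. Since the weight on the square is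
invariant under `(x, y) ↦ (y, x)` and `(x, y) ↦ (-y, -x)`, under which the four parts have different
signs, they are mutually orthogonal. Within one part, `(x - y)²` and `(x + y)²` are the values of
`1 - u + v` and `1 + u + v` at `u = 2xy`, `v = x² + y² - 1`, so that a change of variables turns
orthogonality on the square into orthogonality of the `A` on `Ω` for the weight `W_γ^{(i,j)}`.
In each degree only the two parts with `i + j` of the right parity contribute: a part of the wrong
parity is orthogonal to all polynomials up to its own degree, and hence zero.
-/

/-! ### Orthogonality for a moment functional -/

section MomentFunctional

open MvPolynomial
open scoped Pointwise

variable {ι K : Type*} [CommRing K]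

/-- The polynomials of total degree less than `N`. Counting from above the degree makes the zero
space available as the case `N = 0`, in place of a space of polynomials of degree at most `-1`. -/
def totalDegreeLT (ι K : Type*) [CommRing K] (N : ℕ) : Submodule K (MvPolynomial ι K) where
  carrier := {P | P = 0 ∨ P.totalDegree < N}
  zero_mem' := Or.inl rfl
  add_mem' {P Q} hP hQ := by
    rcases hP with rfl | hP
    · rwa [zero_add]
    rcases hQ with rfl | hQ
    · rw [add_zero]; exact Or.inr hP
    · exact Or.inr ((totalDegree_add P Q).trans_lt (max_lt hP hQ))
  smul_mem' c P hP := by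
    rcases hP with rfl | hP
    · exact Or.inl (smul_zero c)
    · exact Or.inr ((totalDegree_smul_le c P).trans_lt hP)

theorem mem_totalDegreeLT {P : MvPolynomial ι K} {N : ℕ} :
    P ∈ totalDegreeLT ι K N ↔ P = 0 ∨ P.totalDegree < N :=
  Iff.rfl

theorem mem_totalDegreeLT_succ {P : MvPolynomial ι K} {n : ℕ} :
    P ∈ totalDegreeLT ι K (n + 1) ↔ P.totalDegree ≤ n := by
  rw [mem_totalDegreeLT, Nat.lt_succ_iff]
  exact or_iff_right_of_imp fun h => by simp [h]

theorem totalDegreeLT_zero : totalDegreeLT ι K 0 = ⊥ := by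
  ext P
  simp [mem_totalDegreeLT]

theorem totalDegreeLT_mono : Monotone (totalDegreeLT ι K) :=
  fun _ _ h _ hP => hP.imp_right fun hP => hP.trans_le h

theorem mul_mem_totalDegreeLT {A B : MvPolynomial ι K} {N N' d : ℕ} (hA : A.totalDegree ≤ d)
    (hB : B ∈ totalDegreeLT ι K N) (hN : 0 < N → N + d ≤ N') :
    A * B ∈ totalDegreeLT ι K N' := by
  rcases hB with rfl | hB
  · exact Or.inl (mul_zero A)
  · have := totalDegree_mul A B
    exact Or.inr (by omega)

/-- The space of orthogonal polynomials of degree `N - 1` for the moment functional `ℒ`, with `0`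
included: polynomials of degree less than `N` orthogonal to those of degree less than `N - 1`. -/
def orthogonalPolynomials (ℒ : MvPolynomial ι K →ₗ[K] K) (N : ℕ) :
    Submodule K (MvPolynomial ι K) where
  carrier := {P | P ∈ totalDegreeLT ι K N ∧ ∀ Q ∈ totalDegreeLT ι K (N - 1), ℒ (P * Q) = 0}
  zero_mem' := ⟨zero_mem _, fun Q _ => by rw [zero_mul, map_zero]⟩
  add_mem' hP hQ := ⟨add_mem hP.1 hQ.1, fun R hR => by
    rw [add_mul, map_add, hP.2 R hR, hQ.2 R hR, add_zero]⟩
  smul_mem' c _ hP := ⟨Submodule.smul_mem _ c hP.1, fun R hR => by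
    rw [smul_mul_assoc, map_smul, hP.2 R hR, smul_zero]⟩

theorem orthogonalPolynomials_zero (ℒ : MvPolynomial ι K →ₗ[K] K) :
    orthogonalPolynomials ℒ 0 = ⊥ :=
  eq_bot_iff.2 fun _ hP => totalDegreeLT_zero.le hP.1

theorem orthogonalPolynomials_smul (ℒ : MvPolynomial ι K →ₗ[K] K) {c : K} (hc : IsUnit c) {N : ℕ} :
    orthogonalPolynomials (c • ℒ) N = orthogonalPolynomials ℒ N :=
  Submodule.ext fun _ => and_congr_right fun _ => forall₂_congr fun _ _ => hc.smul_eq_zero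

theorem totalDegree_eq_of_mem_orthogonalPolynomials {ℒ : MvPolynomial ι K →ₗ[K] K} {n : ℕ}
    {P : MvPolynomial ι K} (hP : P ∈ orthogonalPolynomials ℒ (n + 1)) (hPP : ℒ (P * P) ≠ 0) :
    P.totalDegree = n :=
  (mem_totalDegreeLT_succ.1 hP.1).eq_of_not_lt fun h_lt => hPP (hP.2 P (Or.inr h_lt))

/-- `ℒ` is quasi-definite: its bilinear form `(P, Q) ↦ ℒ (P * Q)` is nondegenerate on the
polynomials of each bounded degree. -/
def IsQuasiDefinite (ℒ : MvPolynomial ι K →ₗ[K] K) : Prop :=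
  ∀ N, ∀ R ∈ totalDegreeLT ι K N, (∀ Q ∈ totalDegreeLT ι K N, ℒ (R * Q) = 0) → R = 0

/-- `Q 0, …, Q (N - 1)` is an orthonormal basis of the orthogonal polynomials of degree `N - 1`.
In two variables, their number is one more than their degree. -/
structure IsOrthonormalPolynomialBasis (ℒ : MvPolynomial ι K →ₗ[K] K) (N : ℕ)
    (Q : ℕ → MvPolynomial ι K) : Prop where
  orthonormal : ∀ k < N, ∀ j < N, ℒ (Q k * Q j) = if k = j then 1 else 0
  span_eq : Submodule.span K (Q '' Iio N) = orthogonalPolynomials ℒ N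

namespace IsOrthonormalPolynomialBasis

variable {ℒ : MvPolynomial ι K →ₗ[K] K} {N : ℕ} {Q : ℕ → MvPolynomial ι K}

theorem mem (h : IsOrthonormalPolynomialBasis ℒ N Q) {k : ℕ} (hk : k < N) :
    Q k ∈ orthogonalPolynomials ℒ N :=
  h.span_eq ▸ Submodule.subset_span (mem_image_of_mem Q hk)

theorem zero (ℒ : MvPolynomial ι K →ₗ[K] K) (Q : ℕ → MvPolynomial ι K) :
    IsOrthonormalPolynomialBasis ℒ 0 Q where
  orthonormal k hk := absurd hk k.not_lt_zero
  span_eq := by rw [orthogonalPolynomials_zero]; simp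

theorem eq_zero_of_forall_mul_eq_zero (h : IsOrthonormalPolynomialBasis ℒ N Q)
    {R : MvPolynomial ι K} (hR : R ∈ orthogonalPolynomials ℒ N)
    (hRQ : ∀ k < N, ℒ (R * Q k) = 0) : R = 0 := by
  have hIio : (Iio N : Set ℕ) = (Finset.range N : Set ℕ) := by ext; simp
  rw [← h.span_eq, hIio, Submodule.mem_span_image_finset_iff_exists_fun'] at hR
  obtain ⟨c, rfl⟩ := hR
  refine Finset.sum_eq_zero fun k hk => ?_
  have hkN := Finset.mem_range.1 hk
  have hck : c k = 0 := by
    rw [← hRQ k hkN, Finset.sum_mul, map_sum, Finset.sum_eq_single k]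
    · rw [smul_mul_assoc, map_smul, h.orthonormal k hkN k hkN, if_pos rfl, smul_eq_mul, mul_one]
    · intro j hj hjk
      rw [smul_mul_assoc, map_smul, h.orthonormal j (Finset.mem_range.1 hj) k hkN, if_neg hjk,
        smul_zero]
    · exact fun h => absurd hk h
  rw [hck, zero_smul]

theorem smul {b : K} (h : IsOrthonormalPolynomialBasis (b ^ 2 • ℒ) N Q) :
    IsOrthonormalPolynomialBasis ℒ N (b • Q) := by
  cases N with
  | zero => exact .zero _ _
  | succ n =>
    have hb : IsUnit (b ^ 2) :=
      .of_mul_eq_one _ ((h.orthonormal 0 n.succ_pos 0 n.succ_pos).trans (if_pos rfl))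
    refine ⟨fun k hk j hj => ?_, ?_⟩
    · rw [← h.orthonormal k hk j hj, Pi.smul_apply, Pi.smul_apply, smul_mul_smul_comm, map_smul,
        sq, LinearMap.smul_apply]
    · have h_image : (b • Q) '' Iio (n + 1) = b • Q '' Iio (n + 1) := (image_image (b • ·) Q _).symm
      rw [← orthogonalPolynomials_smul ℒ hb, ← h.span_eq, h_image]
      exact Submodule.span_smul_eq_of_isUnit _ _ ((isUnit_pow_iff two_ne_zero).1 hb)

theorem isQuasiDefinite {P : ℕ → ℕ → MvPolynomial ι K}
    (h : ∀ N, IsOrthonormalPolynomialBasis ℒ N (P N)) : IsQuasiDefinite ℒ := by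
  intro N R hR hRQ
  have hRV : R ∈ orthogonalPolynomials ℒ N :=
    ⟨hR, fun Q hQ => hRQ Q (totalDegreeLT_mono N.pred_le hQ)⟩
  exact (h N).eq_zero_of_forall_mul_eq_zero hRV fun k hk => hRQ _ ((h N).mem hk).1

end IsOrthonormalPolynomialBasis

end MomentFunctional

/-! ### The parity decomposition of a polynomial on the square -/

section DegreeFiltration

open MvPolynomial

variable {ι τ K : Type*} [CommSemiring K]

theorem totalDegree_aeval_le {f : ι → MvPolynomial τ K} {d : ℕ} (hf : ∀ i, (f i).totalDegree ≤ d)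
    (P : MvPolynomial ι K) : (aeval f P).totalDegree ≤ P.totalDegree * d := by
  conv_lhs => rw [P.as_sum, map_sum]
  refine totalDegree_finsetSum_le fun s hs => ?_
  have hpow : (s.prod fun i k => f i ^ k).totalDegree ≤ s.sum fun _ k => k * d := by
    refine (totalDegree_finsetProd _ _).trans (Finset.sum_le_sum fun i _ => ?_)
    exact (totalDegree_pow _ _).trans (Nat.mul_le_mul_left _ (hf i))
  rw [aeval_monomial, algebraMap_eq]
  calc (C (coeff s P) * s.prod fun i k => f i ^ k).totalDegree
      ≤ (s.prod fun i k => f i ^ k).totalDegree := by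
        simpa only [totalDegree_C, zero_add] using totalDegree_mul (C (coeff s P)) _
    _ ≤ (s.sum fun _ k => k) * d := hpow.trans_eq (Finset.sum_mul _ _ _).symm
    _ ≤ P.totalDegree * d := Nat.mul_le_mul_right d (le_totalDegree hs)

theorem mem_of_totalDegree_le {V : ℕ → Submodule K (MvPolynomial ι K)} (hV : Monotone V)
    (h_one : 1 ∈ V 0) (h_X : ∀ i m, ∀ R ∈ V m, X i * R ∈ V (m + 1)) {P : MvPolynomial ι K} {m : ℕ}
    (hP : P.totalDegree ≤ m) : P ∈ V m := by
  have h_pow (i : ι) (k : ℕ) : ∀ m, ∀ R ∈ V m, X i ^ k * R ∈ V (m + k) := by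
    induction k with
    | zero => exact fun m R hR => by simpa using hR
    | succ k ih =>
      intro m R hR
      rw [pow_succ', mul_assoc]
      exact h_X i _ _ (ih m R hR)
  have h_monomial (s : ι →₀ ℕ) : ∀ m, ∀ R ∈ V m, monomial s 1 * R ∈ V (m + s.degree) := by
    induction s using Finsupp.induction_linear with
    | zero => exact fun m R hR => by simpa using hR
    | add s t hs ht =>
      intro m R hR
      rw [← one_mul (1 : K), ← monomial_mul, mul_assoc, map_add, add_comm s.degree, ← add_assoc]
      exact hs _ _ (ht m R hR)
    | single i k =>
      intro m R hR
      rw [← X_pow_eq_monomial, Finsupp.degree_single]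
      exact h_pow i k m R hR
  rw [P.as_sum]
  refine sum_mem fun s hs => ?_
  have hs1 : monomial s (1 : K) ∈ V s.degree := by simpa using h_monomial s 0 1 h_one
  have hsm : s.degree ≤ m := (le_totalDegree hs).trans hP
  rw [← mul_one (coeff s P), ← smul_eq_mul, ← smul_monomial]
  exact Submodule.smul_mem _ _ (hV hsm hs1)

end DegreeFiltration

section ParityDecomposition

open MvPolynomial

/-- The factor `(x - y)^i (x + y)^j`, where `e = (i, j)`. It changes sign under
`(x, y) ↦ (y, x)` when `i = 1`, and under `(x, y) ↦ (-y, -x)` when `j = 1`. -/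
def parityFactor (e : Bool × Bool) : MvPolynomial (Fin 2) ℝ :=
  (X 0 - X 1) ^ e.1.toNat * (X 0 + X 1) ^ e.2.toNat

/-- The factor `(1 - u + v)^i (1 + u + v)^j`, where `e = (i, j)`, by which the weight
`W_γ^{(i,j)}` on `Ω` differs from `W_γ`, up to a constant. -/
def parityWeight (e : Bool × Bool) : MvPolynomial (Fin 2) ℝ :=
  (1 - X 0 + X 1) ^ e.1.toNat * (1 + X 0 + X 1) ^ e.2.toNat

/-- The degree `i + j` of `parityFactor (i, j)`. -/
def parityDegree (e : Bool × Bool) : ℕ := e.1.toNat + e.2.toNat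

/-- The substitution `quadSub` as a homomorphism of algebras. -/
def quadSubHom : MvPolynomial (Fin 2) ℝ →ₐ[ℝ] MvPolynomial (Fin 2) ℝ :=
  aeval ![2 * X 0 * X 1, X 0 ^ 2 + X 1 ^ 2 - 1]

/-- The lift `A ↦ (x - y)^i (x + y)^j A(2xy, x² + y² - 1)` of polynomials on `Ω` to the square,
where `e = (i, j)`. -/
def parityLift (e : Bool × Bool) : MvPolynomial (Fin 2) ℝ →ₗ[ℝ] MvPolynomial (Fin 2) ℝ :=
  LinearMap.mulLeft ℝ (parityFactor e) ∘ₗ quadSubHom.toLinearMap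

theorem quadSubHom_apply (A : MvPolynomial (Fin 2) ℝ) : quadSubHom A = quadSub A := rfl

theorem parityLift_apply (e : Bool × Bool) (A : MvPolynomial (Fin 2) ℝ) :
    parityLift e A = parityFactor e * quadSub A := rfl

theorem parityFactor_bot : parityFactor ⊥ = 1 := by simp [parityFactor]

theorem parityLift_bot (A : MvPolynomial (Fin 2) ℝ) : parityLift ⊥ A = quadSub A := by
  rw [parityLift_apply, parityFactor_bot, one_mul]

theorem parityDegree_symmDiff (d e : Bool × Bool) :
    parityDegree (symmDiff d e) + 2 * parityDegree (d ⊓ e) = parityDegree d + parityDegree e := by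
  revert d e; decide

theorem parityDegree_add_compl (e : Bool × Bool) : parityDegree e + parityDegree eᶜ = 2 := by
  revert e; decide

theorem parityDegree_mod_two_ne {d e : Bool × Bool} (h : d ≠ e) (h_compl : d ≠ eᶜ) :
    parityDegree d % 2 ≠ parityDegree e % 2 := by
  revert d e; decide

theorem quadSub_one_sub_add : quadSub (1 - X 0 + X 1) = (X 0 - X 1) ^ 2 := by
  simp only [← quadSubHom_apply, quadSubHom, map_add, map_sub, map_one, aeval_X,
    Matrix.cons_val_zero, Matrix.cons_val_one]
  ring

theorem quadSub_one_add_add : quadSub (1 + X 0 + X 1) = (X 0 + X 1) ^ 2 := by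
  simp only [← quadSubHom_apply, quadSubHom, map_add, map_one, aeval_X,
    Matrix.cons_val_zero, Matrix.cons_val_one]
  ring

theorem quadSub_parityWeight (e : Bool × Bool) : quadSub (parityWeight e) = parityFactor e ^ 2 := by
  rw [← quadSubHom_apply, parityWeight, map_mul, map_pow, map_pow, quadSubHom_apply,
    quadSubHom_apply, quadSub_one_sub_add, quadSub_one_add_add, parityFactor, mul_pow,
    pow_right_comm, pow_right_comm (X 0 + X 1)]

theorem parityFactor_mul_parityFactor (d e : Bool × Bool) :
    parityFactor d * parityFactor e = parityFactor (symmDiff d e) * parityFactor (d ⊓ e) ^ 2 := by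
  have h_pow (a : MvPolynomial (Fin 2) ℝ) (i j : Bool) :
      a ^ i.toNat * a ^ j.toNat = a ^ (symmDiff i j).toNat * (a ^ (i ⊓ j).toNat) ^ 2 := by
    cases i <;> cases j <;> simp [sq]
  rw [parityFactor, parityFactor, mul_mul_mul_comm, h_pow, h_pow, mul_mul_mul_comm, ← mul_pow]
  rfl

theorem parityFactor_mul_parityLift (d e : Bool × Bool) (A : MvPolynomial (Fin 2) ℝ) :
    parityFactor d * parityLift e A = parityLift (symmDiff d e) (parityWeight (d ⊓ e) * A) := by
  rw [parityLift_apply, parityLift_apply, ← quadSubHom_apply (_ * A), map_mul, quadSubHom_apply,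
    quadSubHom_apply, quadSub_parityWeight, ← mul_assoc, ← mul_assoc, parityFactor_mul_parityFactor]

theorem parityLift_mul_parityLift (d e : Bool × Bool) (A B : MvPolynomial (Fin 2) ℝ) :
    parityLift d A * parityLift e B
      = parityLift (symmDiff d e) (parityWeight (d ⊓ e) * (A * B)) := by
  rw [← parityFactor_mul_parityLift]
  simp only [parityLift_apply, ← quadSubHom_apply, map_mul]
  ring

theorem totalDegree_quadSub_le (A : MvPolynomial (Fin 2) ℝ) :
    (quadSub A).totalDegree ≤ A.totalDegree * 2 := by
  refine totalDegree_aeval_le (Fin.forall_fin_two.2 ⟨?_, ?_⟩) A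
  · have h_smul : (2 * X 0 * X 1 : MvPolynomial (Fin 2) ℝ) = (2 : ℝ) • (X 0 * X 1) := by
      rw [smul_eq_C_mul, map_ofNat, mul_assoc]
    change (2 * X 0 * X 1 : MvPolynomial (Fin 2) ℝ).totalDegree ≤ 2
    rw [h_smul]
    exact (totalDegree_smul_le _ _).trans ((totalDegree_mul _ _).trans (by simp))
  · exact (totalDegree_sub _ _).trans (max_le ((totalDegree_add _ _).trans (by simp)) (by simp))

theorem totalDegree_pow_mul_pow_le {K ι : Type*} [CommSemiring K] {A B : MvPolynomial ι K}
    (hA : A.totalDegree ≤ 1) (hB : B.totalDegree ≤ 1) (i j : ℕ) :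
    (A ^ i * B ^ j).totalDegree ≤ i + j := by
  refine (totalDegree_mul _ _).trans (Nat.add_le_add ?_ ?_) <;>
    exact (totalDegree_pow _ _).trans (mul_le_of_le_one_right (Nat.zero_le _) ‹_›)

theorem totalDegree_parityFactor_le (e : Bool × Bool) :
    (parityFactor e).totalDegree ≤ parityDegree e :=
  totalDegree_pow_mul_pow_le ((totalDegree_sub _ _).trans (by simp))
    ((totalDegree_add _ _).trans (by simp)) _ _

theorem totalDegree_parityWeight_le (e : Bool × Bool) :
    (parityWeight e).totalDegree ≤ parityDegree e := by
  refine totalDegree_pow_mul_pow_le ?_ ?_ _ _ <;>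
    refine (totalDegree_add _ _).trans (max_le ?_ (by simp))
  · exact (totalDegree_sub _ _).trans (by simp)
  · exact (totalDegree_add _ _).trans (by simp)

theorem parityLift_mem_totalDegreeLT {e : Bool × Bool} {A : MvPolynomial (Fin 2) ℝ} {N M : ℕ}
    (hA : A ∈ totalDegreeLT (Fin 2) ℝ N) (hNM : 0 < N → 2 * N + parityDegree e ≤ M + 1) :
    parityLift e A ∈ totalDegreeLT (Fin 2) ℝ M := by
  have h_quadSub : quadSub A ∈ totalDegreeLT (Fin 2) ℝ (2 * N - 1) := by
    rcases hA with rfl | hA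
    · exact Or.inl (map_zero quadSubHom)
    · have := totalDegree_quadSub_le A
      exact Or.inr (by omega)
  exact mul_mem_totalDegreeLT (totalDegree_parityFactor_le e) h_quadSub (by omega)

/-- The span of the lifts of degree less than `M` to the square. -/
def parityLiftSpan (M : ℕ) : Submodule ℝ (MvPolynomial (Fin 2) ℝ) :=
  ⨆ e, (totalDegreeLT (Fin 2) ℝ ((M + 1 - parityDegree e) / 2)).map (parityLift e)

theorem parityLift_mem_parityLiftSpan {e : Bool × Bool} {A : MvPolynomial (Fin 2) ℝ} {M : ℕ}
    (hA : A ∈ totalDegreeLT (Fin 2) ℝ ((M + 1 - parityDegree e) / 2)) :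
    parityLift e A ∈ parityLiftSpan M :=
  Submodule.mem_iSup_of_mem e (Submodule.mem_map_of_mem hA)

theorem parityLiftSpan_mono : Monotone parityLiftSpan := fun _ _ h =>
  iSup_mono fun _ => Submodule.map_mono (totalDegreeLT_mono (by omega))

theorem parityFactor_mul_mem_parityLiftSpan {d : Bool × Bool} (hd : parityDegree d = 1) {M : ℕ}
    {R : MvPolynomial (Fin 2) ℝ} (hR : R ∈ parityLiftSpan M) :
    parityFactor d * R ∈ parityLiftSpan (M + 1) := by
  suffices h : parityLiftSpan M ≤
      (parityLiftSpan (M + 1)).comap (LinearMap.mulLeft ℝ (parityFactor d)) from h hR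
  refine iSup_le fun e => Submodule.map_le_iff_le_comap.2 fun A hA => ?_
  rw [Submodule.mem_comap, Submodule.mem_comap, LinearMap.mulLeft_apply,
    parityFactor_mul_parityLift]
  refine parityLift_mem_parityLiftSpan
    (mul_mem_totalDegreeLT (totalDegree_parityWeight_le _) hA fun hN => ?_)
  have := parityDegree_symmDiff d e
  omega

theorem X_mul_mem_parityLiftSpan (i : Fin 2) {M : ℕ} {R : MvPolynomial (Fin 2) ℝ}
    (hR : R ∈ parityLiftSpan M) : X i * R ∈ parityLiftSpan (M + 1) := by
  have h_sub : (X 0 - X 1) * R ∈ parityLiftSpan (M + 1) := by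
    simpa [parityFactor] using parityFactor_mul_mem_parityLiftSpan (d := (true, false)) rfl hR
  have h_add : (X 0 + X 1) * R ∈ parityLiftSpan (M + 1) := by
    simpa [parityFactor] using parityFactor_mul_mem_parityLiftSpan (d := (false, true)) rfl hR
  have h_zero : X 0 * R = (1 / 2 : ℝ) • ((X 0 + X 1) * R + (X 0 - X 1) * R) := by
    rw [add_mul, sub_mul]; module
  have h_one : X 1 * R = (1 / 2 : ℝ) • ((X 0 + X 1) * R - (X 0 - X 1) * R) := by
    rw [add_mul, sub_mul]; module
  revert i
  exact Fin.forall_fin_two.2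
    ⟨h_zero ▸ Submodule.smul_mem _ _ (add_mem h_add h_sub),
      h_one ▸ Submodule.smul_mem _ _ (sub_mem h_add h_sub)⟩

theorem totalDegreeLT_le_parityLiftSpan (M : ℕ) :
    totalDegreeLT (Fin 2) ℝ M ≤ parityLiftSpan M := by
  cases M with
  | zero => exact totalDegreeLT_zero.trans_le bot_le
  | succ m =>
    intro R hR
    refine mem_of_totalDegree_le (V := fun m => parityLiftSpan (m + 1))
      (fun _ _ h => parityLiftSpan_mono (Nat.succ_le_succ h)) ?_
      (fun i m R => X_mul_mem_parityLiftSpan i) (mem_totalDegreeLT_succ.1 hR)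
    have h_one : parityLift ⊥ 1 ∈ parityLiftSpan 1 :=
      parityLift_mem_parityLiftSpan (mem_totalDegreeLT_succ.2 totalDegree_one.le)
    simpa only [parityLift_bot, ← quadSubHom_apply, map_one] using h_one

theorem exists_eq_sum_parityLift {M : ℕ} {R : MvPolynomial (Fin 2) ℝ}
    (hR : R ∈ totalDegreeLT (Fin 2) ℝ M) :
    ∃ A : Bool × Bool → MvPolynomial (Fin 2) ℝ,
      (∀ e, A e ∈ totalDegreeLT (Fin 2) ℝ ((M + 1 - parityDegree e) / 2)) ∧
      R = ∑ e, parityLift e (A e) := by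
  obtain ⟨f, hf, rfl⟩ :=
    (Submodule.mem_iSup_iff_exists_finsupp _ R).1 (totalDegreeLT_le_parityLiftSpan M hR)
  choose A hA hAf using hf
  exact ⟨A, hA, by simp only [hAf, Finsupp.sum_fintype f (fun _ A => A) fun _ => rfl]⟩

end ParityDecomposition

/-! ### Orthogonal polynomials for a functional invariant under the parity symmetries -/

section ParityExtension

open MvPolynomial

/-- The functional `A ↦ ℒ ((1 - u + v)^i (1 + u + v)^j A)`, where `e = (i, j)`: if `ℒ` is
integration against `W_γ`, this is integration against `W_γ^{(i,j)}`, up to a constant. -/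
def parityFunctional (ℒ : MvPolynomial (Fin 2) ℝ →ₗ[ℝ] ℝ) (e : Bool × Bool) :
    MvPolynomial (Fin 2) ℝ →ₗ[ℝ] ℝ :=
  ℒ ∘ₗ LinearMap.mulLeft ℝ (parityWeight e)

/-- `ℒ'` extends `ℒ` along `quadSub`, and vanishes on the polynomials which are odd under one of
`(x, y) ↦ (y, x)` and `(x, y) ↦ (-y, -x)`. -/
structure IsParityExtension (ℒ ℒ' : MvPolynomial (Fin 2) ℝ →ₗ[ℝ] ℝ) : Prop where
  apply_quadSub : ∀ A, ℒ' (quadSub A) = ℒ A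
  apply_parityLift : ∀ d ≠ ⊥, ∀ A, ℒ' (parityLift d A) = 0

namespace IsParityExtension

variable {ℒ ℒ' : MvPolynomial (Fin 2) ℝ →ₗ[ℝ] ℝ} {d e : Bool × Bool} {M N N' : ℕ}

theorem apply_parityLift_mul_of_ne (h : IsParityExtension ℒ ℒ') (hde : d ≠ e)
    (A B : MvPolynomial (Fin 2) ℝ) : ℒ' (parityLift d A * parityLift e B) = 0 := by
  rw [parityLift_mul_parityLift]
  exact h.apply_parityLift _ (mt symmDiff_eq_bot.1 hde) _

theorem apply_parityLift_mul_self (h : IsParityExtension ℒ ℒ') (e : Bool × Bool)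
    (A B : MvPolynomial (Fin 2) ℝ) :
    ℒ' (parityLift e A * parityLift e B) = parityFunctional ℒ e (A * B) := by
  rw [parityLift_mul_parityLift, symmDiff_self, inf_idem, parityLift_bot, h.apply_quadSub]
  rfl

theorem apply_sum_parityLift_mul (h : IsParityExtension ℒ ℒ')
    (A : Bool × Bool → MvPolynomial (Fin 2) ℝ) (e : Bool × Bool) (B : MvPolynomial (Fin 2) ℝ) :
    ℒ' ((∑ d, parityLift d (A d)) * parityLift e B) = parityFunctional ℒ e (A e * B) := by
  rw [Finset.sum_mul, map_sum, Fintype.sum_eq_single e, h.apply_parityLift_mul_self]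
  exact fun d hd => h.apply_parityLift_mul_of_ne hd _ _

theorem parityLift_mem_orthogonalPolynomials (h : IsParityExtension ℒ ℒ')
    (hN : 2 * N + parityDegree e = M + 1) {A : MvPolynomial (Fin 2) ℝ}
    (hA : A ∈ orthogonalPolynomials (parityFunctional ℒ e) N) :
    parityLift e A ∈ orthogonalPolynomials ℒ' M := by
  refine ⟨parityLift_mem_totalDegreeLT hA.1 fun _ => hN.le, fun Q hQ => ?_⟩
  obtain ⟨B, hB, rfl⟩ := exists_eq_sum_parityLift hQ
  rw [mul_comm, h.apply_sum_parityLift_mul, mul_comm]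
  exact hA.2 _ (totalDegreeLT_mono (by omega) (hB e))

theorem parityFunctional_mul_eq_zero (h : IsParityExtension ℒ ℒ')
    {A : Bool × Bool → MvPolynomial (Fin 2) ℝ}
    (hA : ∑ e, parityLift e (A e) ∈ orthogonalPolynomials ℒ' M) {B : MvPolynomial (Fin 2) ℝ}
    (hB : B ∈ totalDegreeLT (Fin 2) ℝ ((M - parityDegree e) / 2)) :
    parityFunctional ℒ e (A e * B) = 0 := by
  rw [← h.apply_sum_parityLift_mul]
  exact hA.2 _ (parityLift_mem_totalDegreeLT hB (by omega))

theorem exists_eq_parityLift_add_parityLift (h : IsParityExtension ℒ ℒ')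
    (hℒ : ∀ e, IsQuasiDefinite (parityFunctional ℒ e)) (hN : 2 * N + parityDegree e = M + 1)
    (hN' : 2 * N' + parityDegree eᶜ = M + 1) {R : MvPolynomial (Fin 2) ℝ}
    (hR : R ∈ orthogonalPolynomials ℒ' M) :
    ∃ A ∈ orthogonalPolynomials (parityFunctional ℒ e) N,
      ∃ A' ∈ orthogonalPolynomials (parityFunctional ℒ eᶜ) N',
        R = parityLift e A + parityLift eᶜ A' := by
  obtain ⟨A, hA, rfl⟩ := exists_eq_sum_parityLift hR.1
  have h_mem {d : Bool × Bool} {n : ℕ} (hn : 2 * n + parityDegree d = M + 1) :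
      A d ∈ orthogonalPolynomials (parityFunctional ℒ d) n :=
    ⟨totalDegreeLT_mono (by omega) (hA d), fun B hB =>
      h.parityFunctional_mul_eq_zero hR (totalDegreeLT_mono (by omega) hB)⟩
  have h_zero (d : Bool × Bool) (hd : d ≠ e ∧ d ≠ eᶜ) : A d = 0 := by
    have h_parity := parityDegree_mod_two_ne hd.1 hd.2
    have h_floor : (M + 1 - parityDegree d) / 2 = (M - parityDegree d) / 2 := by omega
    exact hℒ d _ _ (h_floor ▸ hA d) fun B hB => h.parityFunctional_mul_eq_zero hR hB
  refine ⟨A e, h_mem hN, A eᶜ, h_mem hN', ?_⟩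
  exact Fintype.sum_eq_add e eᶜ ne_compl_self fun d hd => by rw [h_zero d hd, map_zero]

theorem isOrthonormalPolynomialBasis (h : IsParityExtension ℒ ℒ')
    (hℒ : ∀ e, IsQuasiDefinite (parityFunctional ℒ e)) (hN : 2 * N + parityDegree e = M + 1)
    (hN' : 2 * N' + parityDegree eᶜ = M + 1) {P P' : ℕ → MvPolynomial (Fin 2) ℝ}
    (hP : IsOrthonormalPolynomialBasis (parityFunctional ℒ e) N P)
    (hP' : IsOrthonormalPolynomialBasis (parityFunctional ℒ eᶜ) N' P') :
    IsOrthonormalPolynomialBasis ℒ' M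
      (fun k => if k < N then parityLift e (P k) else parityLift eᶜ (P' (k - N))) := by
  have hM : M = N + N' := by have := parityDegree_add_compl e; omega
  refine ⟨fun k hk j hj => ?_, le_antisymm (Submodule.span_le.2 ?_) fun R hR => ?_⟩
  · by_cases hkN : k < N <;> by_cases hjN : j < N
    · rw [if_pos hkN, if_pos hjN, h.apply_parityLift_mul_self, hP.orthonormal k hkN j hjN]
    · rw [if_pos hkN, if_neg hjN, h.apply_parityLift_mul_of_ne ne_compl_self, if_neg (by omega)]
    · rw [if_neg hkN, if_pos hjN, h.apply_parityLift_mul_of_ne ne_compl_self.symm,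
        if_neg (by omega)]
    · rw [if_neg hkN, if_neg hjN, h.apply_parityLift_mul_self,
        hP'.orthonormal _ (by omega) _ (by omega)]
      exact if_congr (by omega) rfl rfl
  · rintro _ ⟨k, hk, rfl⟩
    rw [mem_Iio] at hk
    dsimp only
    split_ifs with hkN
    · exact h.parityLift_mem_orthogonalPolynomials hN (hP.mem hkN)
    · exact h.parityLift_mem_orthogonalPolynomials hN' (hP'.mem (by omega))
  · obtain ⟨A, hA, A', hA', rfl⟩ := h.exists_eq_parityLift_add_parityLift hℒ hN hN' hR
    rw [← hP.span_eq] at hA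
    rw [← hP'.span_eq] at hA'
    refine add_mem ((Submodule.map_span_le _ _ _).2 ?_ ⟨A, hA, rfl⟩)
      ((Submodule.map_span_le _ _ _).2 ?_ ⟨A', hA', rfl⟩)
    · rintro _ ⟨k, hk, rfl⟩
      exact Submodule.subset_span ⟨k, hk.trans_le (hM ▸ Nat.le_add_right N N'), if_pos hk⟩
    · rintro _ ⟨k, hk, rfl⟩
      refine Submodule.subset_span ⟨N + k, hM ▸ Nat.add_lt_add_left hk N, ?_⟩
      simp only [Nat.not_lt.2 (Nat.le_add_right N k), if_false, Nat.add_sub_cancel_left]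

end IsParityExtension

end ParityExtension

/-! ### The moment functional of a planar weight -/

section PlanarWeight

open MvPolynomial

variable {D : Set (ℝ × ℝ)} {W W' : ℝ × ℝ → ℝ}

theorem evalP_mul (P Q : MvPolynomial (Fin 2) ℝ) (q : ℝ × ℝ) :
    evalP (P * Q) q = evalP P q * evalP Q q :=
  map_mul _ P Q

theorem continuous_evalP (P : MvPolynomial (Fin 2) ℝ) : Continuous (evalP P) :=
  (MvPolynomial.continuous_eval P).comp (by fun_prop)

/-- Every polynomial is integrable on `D` against the weight `W`. -/
def HasMoments (D : Set (ℝ × ℝ)) (W : ℝ × ℝ → ℝ) : Prop :=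
  ∀ P, IntegrableOn (fun q => evalP P q * W q) D

theorem hasMoments_of_isBounded (hD : MeasurableSet D) (h_bdd : Bornology.IsBounded D)
    (hW : IntegrableOn W D) : HasMoments D W := fun P =>
  .continuousOn_mul_of_subset (continuous_evalP P).continuousOn hW h_bdd.isCompact_closure hD
    subset_closure

/-- The moment functional `P ↦ ∫_D P W`. -/
def momentFunctional (h : HasMoments D W) : MvPolynomial (Fin 2) ℝ →ₗ[ℝ] ℝ where
  toFun P := ∫ q in D, evalP P q * W q
  map_add' P Q := by
    rw [← integral_add (h P) (h Q)]
    simp only [evalP, map_add, add_mul]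
  map_smul' c P := by
    rw [RingHom.id_apply, smul_eq_mul, ← integral_const_mul]
    simp only [evalP, smul_eval, mul_assoc]

theorem momentFunctional_apply (h : HasMoments D W) (P : MvPolynomial (Fin 2) ℝ) :
    momentFunctional h P = ∫ q in D, evalP P q * W q := rfl

theorem momentFunctional_mul (h : HasMoments D W) (P Q : MvPolynomial (Fin 2) ℝ) :
    momentFunctional h (P * Q) = ∫ q in D, evalP P q * evalP Q q * W q := by
  simp only [momentFunctional_apply, evalP_mul]

theorem hasMoments_of_eq_mul (hD : MeasurableSet D) {c : ℝ} {R : MvPolynomial (Fin 2) ℝ}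
    (hW' : ∀ q ∈ D, W' q = c * (evalP R q * W q)) (h : HasMoments D W) : HasMoments D W' := by
  intro P
  refine IntegrableOn.congr_fun ((h (P * R)).const_mul c) (fun q hq => ?_) hD
  rw [hW' q hq, evalP_mul]
  ring

theorem momentFunctional_eq_of_eq_mul (hD : MeasurableSet D) {c : ℝ} {R : MvPolynomial (Fin 2) ℝ}
    (hW' : ∀ q ∈ D, W' q = c * (evalP R q * W q)) (h : HasMoments D W) (h' : HasMoments D W') :
    momentFunctional h' = c • momentFunctional h ∘ₗ LinearMap.mulLeft ℝ R := by
  refine LinearMap.ext fun P => ?_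
  change ∫ q in D, evalP P q * W' q = c * ∫ q in D, evalP (R * P) q * W q
  rw [← integral_const_mul]
  refine setIntegral_congr_fun hD fun q hq => ?_
  rw [hW' q hq, evalP_mul]
  ring

theorem integrableOn_of_isONBVn {Q : ℕ → MvPolynomial (Fin 2) ℝ} (h : isONBVn D W 0 Q) :
    IntegrableOn W D := by
  obtain ⟨c, hc⟩ : ∃ c, Q 0 = C c := ⟨_, totalDegree_eq_zero_iff_eq_C.1 (h.1 0 le_rfl).1⟩
  have h_norm : ∫ q in D, c * c * W q = 1 := by
    simpa [hc, evalP] using h.2.1 0 le_rfl 0 le_rfl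
  have hc0 : c * c ≠ 0 := fun hc0 => by simp [hc0] at h_norm
  have h_int : IntegrableOn (fun q => c * c * W q) D :=
    not_not.1 fun h_int => by simp [integral_undef h_int] at h_norm
  exact (integrable_const_mul_iff hc0.isUnit W).1 h_int

theorem mem_Vpoly_iff (h : HasMoments D W) {n : ℕ} {P : MvPolynomial (Fin 2) ℝ} :
    P ∈ Vpoly D W n ↔
      P.totalDegree = n ∧ P ∈ orthogonalPolynomials (momentFunctional h) (n + 1) := by
  refine and_congr_right fun hP => ⟨fun hPQ => ⟨mem_totalDegreeLT_succ.2 hP.le, ?_⟩, ?_⟩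
  · rintro Q (rfl | hQ)
    · rw [mul_zero, map_zero]
    · exact (momentFunctional_mul h P Q).trans (hPQ Q hQ)
  · exact fun hP Q hQ => (momentFunctional_mul h P Q).symm.trans (hP.2 Q (Or.inr hQ))

theorem isONBVn_iff (h : HasMoments D W) {n : ℕ} {Q : ℕ → MvPolynomial (Fin 2) ℝ} :
    isONBVn D W n Q ↔ IsOrthonormalPolynomialBasis (momentFunctional h) (n + 1) Q := by
  simp only [isONBVn, mem_Vpoly_iff h, ← momentFunctional_mul h, ← Nat.lt_succ_iff (n := n)]
  have h_Iio : Iio (n + 1) = Iic n := Order.Iio_succ n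
  constructor
  · rintro ⟨h_mem, h_orth, h_span⟩
    refine ⟨h_orth, le_antisymm (Submodule.span_le.2 ?_) fun R hR => ?_⟩
    · rintro _ ⟨k, hk, rfl⟩
      exact (h_mem k hk).2
    rw [h_Iio]
    rcases (mem_totalDegreeLT_succ.1 hR.1).eq_or_lt with hRn | hRn
    · exact h_span R ⟨hRn, hR⟩
    -- `R + Q 0` has degree exactly `n`, and so is covered by the hypothesis.
    have h_deg : (Q 0 + R).totalDegree = n := by
      rw [totalDegree_add_eq_left_of_totalDegree_lt, (h_mem 0 n.succ_pos).1]
      rwa [(h_mem 0 n.succ_pos).1]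
    refine (Submodule.add_mem_iff_right _ ?_).1
      (h_span _ ⟨h_deg, add_mem (h_mem 0 n.succ_pos).2 hR⟩)
    exact Submodule.subset_span ⟨0, n.zero_le, rfl⟩
  · intro hQ
    refine ⟨fun k hk => ⟨?_, hQ.mem hk⟩, hQ.orthonormal, fun R hR => ?_⟩
    · exact totalDegree_eq_of_mem_orthogonalPolynomials (hQ.mem hk)
        (by rw [hQ.orthonormal k hk k hk, if_pos rfl]; exact one_ne_zero)
    · rw [← h_Iio, hQ.span_eq]
      exact hR.2

theorem isOrthonormalPolynomialBasis_of_isONBVn (h : HasMoments D W)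
    {P : ℕ → ℕ → MvPolynomial (Fin 2) ℝ} (hP : ∀ n, isONBVn D W n (P n)) (N : ℕ) :
    IsOrthonormalPolynomialBasis (momentFunctional h) N (P (N - 1)) := by
  cases N with
  | zero => exact .zero _ _
  | succ n => exact (isONBVn_iff h).1 (hP n)

end PlanarWeight

/-! ### Integrals under symmetries -/

section Symmetry

variable {α E : Type*} [MeasurableSpace α] {μ : Measure α} [NormedAddCommGroup E]
  [NormedSpace ℝ E] {σ : α ≃ᵐ α} {F : α → E} {D S : Set α}

theorem integrableOn_and_setIntegral_eq_two_smul_of_symmetric (hσ : MeasurePreserving σ μ μ)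
    (hF : ∀ q, F (σ q) = F q) (hD : MeasurableSet D) (hS : MeasurableSet S)
    (h_disj : Disjoint S (σ ⁻¹' S)) (h_sub : S ∪ σ ⁻¹' S ⊆ D)
    (h_zero : ∀ q ∈ D \ (S ∪ σ ⁻¹' S), F q = 0) (h : IntegrableOn F S μ) :
    IntegrableOn F D μ ∧ ∫ q in D, F q ∂μ = (2 : ℝ) • ∫ q in S, F q ∂μ := by
  have h_int : IntegrableOn F (σ ⁻¹' S) μ := by
    simpa only [Function.comp_def, hF] using
      (hσ.integrableOn_comp_preimage σ.measurableEmbedding).2 h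
  have h_preimage : ∫ q in σ ⁻¹' S, F q ∂μ = ∫ q in S, F q ∂μ := by
    simpa only [hF] using hσ.setIntegral_preimage_emb σ.measurableEmbedding F S
  refine ⟨(h.union h_int).of_forall_sdiff_eq_zero hD h_zero, ?_⟩
  rw [setIntegral_eq_of_subset_of_forall_sdiff_eq_zero hD h_sub h_zero,
    setIntegral_union h_disj (σ.measurable hS) h h_int, h_preimage, two_smul]

theorem setIntegral_eq_zero_of_antisymmetric (hσ : MeasurePreserving σ μ μ)
    (hF : ∀ q, F (σ q) = -F q) (hD : σ ⁻¹' D = D) : ∫ q in D, F q ∂μ = 0 := by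
  have h_preimage := hσ.setIntegral_preimage_emb σ.measurableEmbedding F D
  simp only [hD, hF, integral_neg] at h_preimage
  have := IsAddTorsionFree.of_isTorsionFree ℝ E
  exact neg_eq_self.1 h_preimage

end Symmetry

/-! ### The substitution as a change of variables -/

section ChangeOfVariables

open MvPolynomial

theorem xRoot_add_yRoot (q : ℝ × ℝ) : xRoot q + yRoot q = q.1 := by
  rw [xRoot, yRoot]; ring

theorem xRoot_mul_yRoot {q : ℝ × ℝ} (hq : 0 ≤ q.1 ^ 2 - 4 * q.2) : xRoot q * yRoot q = q.2 := by
  rw [xRoot, yRoot]; linear_combination -(Real.sq_sqrt hq) / 4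

theorem mem_omegaDom_iff {q : ℝ × ℝ} :
    q ∈ omegaDom ↔
      0 < 1 - q.1 + q.2 ∧ 0 < 1 + q.1 + q.2 ∧ q.1 ∈ Ioo (-2) 2 ∧ 0 < q.1 ^ 2 - 4 * q.2 := by
  constructor
  · rintro ⟨x, y, hx, hxy, hy, rfl⟩
    refine ⟨?_, ?_, ⟨by dsimp only; linarith, by dsimp only; linarith⟩, ?_⟩
    · linear_combination mul_pos (sub_pos.2 (hxy.trans hy)) (sub_pos.2 hy)
    · linear_combination mul_pos (sub_pos.2 hx) (sub_pos.2 (hx.trans hxy))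
    · linear_combination pow_pos (sub_pos.2 hxy) 2
  · rintro ⟨h_sub, h_add, ⟨h_left, h_right⟩, h_discr⟩
    have h_sqrt_left : √(q.1 ^ 2 - 4 * q.2) < 2 + q.1 :=
      (Real.sqrt_lt' (by linarith)).2 (by linarith)
    have h_sqrt_right : √(q.1 ^ 2 - 4 * q.2) < 2 - q.1 :=
      (Real.sqrt_lt' (by linarith)).2 (by linarith)
    have h_sqrt_pos := Real.sqrt_pos.2 h_discr
    refine ⟨xRoot q, yRoot q, ?_, ?_, ?_, ?_⟩
    · rw [xRoot]; linarith
    · rw [xRoot, yRoot]; linarith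
    · rw [yRoot]; linarith
    · rw [xRoot_add_yRoot, xRoot_mul_yRoot h_discr.le]

theorem isBounded_omegaDom : Bornology.IsBounded omegaDom := by
  refine (Metric.isBounded_Icc ((-2, -1) : ℝ × ℝ) (2, 1)).subset ?_
  rintro _ ⟨x, y, hx, hxy, hy, rfl⟩
  refine ⟨⟨?_, ?_⟩, ?_, ?_⟩ <;> dsimp only <;> nlinarith

theorem one_sub_xRoot_mul_one_sub_yRoot {q : ℝ × ℝ} (hq : q ∈ omegaDom) :
    (1 - xRoot q) * (1 - yRoot q) = 1 - q.1 + q.2 := by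
  linear_combination xRoot_mul_yRoot (mem_omegaDom_iff.1 hq).2.2.2.le - xRoot_add_yRoot q

theorem one_add_xRoot_mul_one_add_yRoot {q : ℝ × ℝ} (hq : q ∈ omegaDom) :
    (1 + xRoot q) * (1 + yRoot q) = 1 + q.1 + q.2 := by
  linear_combination xRoot_mul_yRoot (mem_omegaDom_iff.1 hq).2.2.2.le + xRoot_add_yRoot q

/-- The map `(x, y) ↦ (2xy, x² + y² - 1)` from the square onto the closure of `Ω`. -/
def quadMap (q : ℝ × ℝ) : ℝ × ℝ := (2 * q.1 * q.2, q.1 ^ 2 + q.2 ^ 2 - 1)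

/-- The triangle `|x| < y < 1`, a fundamental domain in the square for the symmetries of
`quadMap`. -/
def wedgeDom : Set (ℝ × ℝ) := {q | -q.2 < q.1 ∧ q.1 < q.2 ∧ q.2 < 1}

theorem one_sub_quadMap (q : ℝ × ℝ) : 1 - (quadMap q).1 + (quadMap q).2 = (q.1 - q.2) ^ 2 := by
  rw [quadMap]; ring

theorem one_add_quadMap (q : ℝ × ℝ) : 1 + (quadMap q).1 + (quadMap q).2 = (q.1 + q.2) ^ 2 := by
  rw [quadMap]; ring

theorem discr_quadMap (q : ℝ × ℝ) :
    (quadMap q).1 ^ 2 - 4 * (quadMap q).2 = 4 * ((1 - q.1 ^ 2) * (1 - q.2 ^ 2)) := by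
  rw [quadMap]; ring

theorem isOpen_wedgeDom : IsOpen wedgeDom :=
  (isOpen_lt (by fun_prop) (by fun_prop)).and
    ((isOpen_lt (by fun_prop) (by fun_prop)).and (isOpen_lt (by fun_prop) (by fun_prop)))

theorem injOn_quadMap : InjOn quadMap wedgeDom := by
  rintro p ⟨hp, hp', -⟩ q ⟨hq, hq', -⟩ hpq
  have h_add : p.1 + p.2 = q.1 + q.2 := by
    refine (pow_left_inj₀ (by linarith) (by linarith) two_ne_zero).1 ?_
    rw [← one_add_quadMap, ← one_add_quadMap, hpq]
  have h_sub : p.2 - p.1 = q.2 - q.1 := by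
    refine (pow_left_inj₀ (by linarith) (by linarith) two_ne_zero).1 ?_
    rw [sub_sq_comm p.2, sub_sq_comm q.2, ← one_sub_quadMap, ← one_sub_quadMap, hpq]
  exact Prod.ext (by linarith) (by linarith)

theorem quadMap_mem_omegaDom {q : ℝ × ℝ} (hq : q ∈ wedgeDom) : quadMap q ∈ omegaDom := by
  obtain ⟨h_neg, h_lt, h_one⟩ := hq
  have hx : q.1 ^ 2 < 1 := (sq_lt_one_iff_abs_lt_one _).2 (abs_lt.2 ⟨by linarith, by linarith⟩)
  have hy : q.2 ^ 2 < 1 := (sq_lt_one_iff_abs_lt_one _).2 (abs_lt.2 ⟨by linarith, by linarith⟩)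
  rw [mem_omegaDom_iff, one_sub_quadMap, one_add_quadMap, discr_quadMap, sub_sq_comm]
  refine ⟨pow_pos (by linarith) 2, pow_pos (by linarith) 2, ?_, ?_⟩
  · constructor <;> rw [quadMap] <;> nlinarith [sq_nonneg (q.1 + q.2), sq_nonneg (q.1 - q.2)]
  · exact mul_pos four_pos (mul_pos (sub_pos.2 hx) (sub_pos.2 hy))

theorem omegaDom_subset_image_quadMap : omegaDom ⊆ quadMap '' wedgeDom := by
  intro q hq
  obtain ⟨h_sub, h_add, ⟨h_left, h_right⟩, h_discr⟩ := mem_omegaDom_iff.1 hq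
  -- `A` and `B` are the values of `x + y` and `y - x` at the preimage `(x, y)` of `q`.
  set A := √(1 + q.1 + q.2)
  set B := √(1 - q.1 + q.2)
  have hA : 0 < A := Real.sqrt_pos.2 h_add
  have hB : 0 < B := Real.sqrt_pos.2 h_sub
  have hA_sq : A ^ 2 = 1 + q.1 + q.2 := Real.sq_sqrt h_add.le
  have hB_sq : B ^ 2 = 1 - q.1 + q.2 := Real.sq_sqrt h_sub.le
  have hA_lt : A < 1 + q.1 / 2 := (Real.sqrt_lt' (by linarith)).2 (by linarith)
  have hB_lt : B < 1 - q.1 / 2 := (Real.sqrt_lt' (by linarith)).2 (by linarith)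
  refine ⟨((A - B) / 2, (A + B) / 2), ⟨?_, ?_, ?_⟩, Prod.ext ?_ ?_⟩
  · dsimp only; linarith
  · dsimp only; linarith
  · dsimp only; linarith
  · rw [quadMap]; linear_combination (hA_sq - hB_sq) / 2
  · rw [quadMap]; linear_combination (hA_sq + hB_sq) / 2

theorem image_quadMap_wedgeDom : quadMap '' wedgeDom = omegaDom :=
  Subset.antisymm (image_subset_iff.2 fun _ => quadMap_mem_omegaDom)
    omegaDom_subset_image_quadMap

/-- The derivative of `quadMap`. -/
def quadMapDeriv (q : ℝ × ℝ) : ℝ × ℝ →L[ℝ] ℝ × ℝ :=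
  (Matrix.toLin (.finTwoProd ℝ) (.finTwoProd ℝ)
    !![2 * q.2, 2 * q.1; 2 * q.1, 2 * q.2]).toContinuousLinearMap

theorem hasFDerivAt_quadMap (q : ℝ × ℝ) : HasFDerivAt quadMap (quadMapDeriv q) q := by
  rw [quadMapDeriv, Matrix.toLin_finTwoProd_toContinuousLinearMap]
  have h_fst : HasFDerivAt Prod.fst (ContinuousLinearMap.fst ℝ ℝ ℝ) q := hasFDerivAt_fst
  have h_snd : HasFDerivAt Prod.snd (ContinuousLinearMap.snd ℝ ℝ ℝ) q := hasFDerivAt_snd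
  refine (((h_fst.const_mul 2).mul h_snd).prodMk
    (((h_fst.pow 2).add (h_snd.pow 2)).sub_const 1)).congr_fderiv ?_
  ext <;> simp [mul_comm]

theorem det_quadMapDeriv (q : ℝ × ℝ) : (quadMapDeriv q).det = 4 * (q.2 ^ 2 - q.1 ^ 2) := by
  rw [quadMapDeriv, ContinuousLinearMap.det, LinearMap.coe_toContinuousLinearMap,
    LinearMap.det_toLin, Matrix.det_fin_two_of]
  ring

theorem measurableSet_omegaDom : MeasurableSet omegaDom := by
  rw [← image_quadMap_wedgeDom]
  exact isOpen_wedgeDom.measurableSet.image_of_continuousOn_injOn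
    (fun q _ => (hasFDerivAt_quadMap q).continuousAt.continuousWithinAt) injOn_quadMap

/-- The weight `W(2xy, x² + y² - 1) |x² - y²|` on the square, which is `𝒲_γ` for `W = W_γ`. -/
def squareWeight (W : ℝ × ℝ → ℝ) (q : ℝ × ℝ) : ℝ := W (quadMap q) * |q.1 ^ 2 - q.2 ^ 2|

variable {W : ℝ × ℝ → ℝ}

theorem abs_det_quadMapDeriv_smul (W : ℝ × ℝ → ℝ) (q : ℝ × ℝ) :
    |(quadMapDeriv q).det| • W (quadMap q) = 4 * squareWeight W q := by
  rw [det_quadMapDeriv, abs_mul, abs_of_pos four_pos, abs_sub_comm, squareWeight, smul_eq_mul]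
  ring

theorem integrableOn_wedgeDom_squareWeight (hW : IntegrableOn W omegaDom) :
    IntegrableOn (squareWeight W) wedgeDom := by
  rw [← image_quadMap_wedgeDom, integrableOn_image_iff_integrableOn_abs_det_fderiv_smul volume
    isOpen_wedgeDom.measurableSet (fun q _ => (hasFDerivAt_quadMap q).hasFDerivWithinAt)
    injOn_quadMap] at hW
  simp only [abs_det_quadMapDeriv_smul] at hW
  exact (integrable_const_mul_iff (IsUnit.mk0 _ four_ne_zero) _).1 hW

theorem setIntegral_wedgeDom_squareWeight (W : ℝ × ℝ → ℝ) :
    ∫ q in omegaDom, W q = 4 * ∫ q in wedgeDom, squareWeight W q := by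
  rw [← image_quadMap_wedgeDom, integral_image_eq_integral_abs_det_fderiv_smul volume
    isOpen_wedgeDom.measurableSet (fun q _ => (hasFDerivAt_quadMap q).hasFDerivWithinAt)
    injOn_quadMap]
  simp only [abs_det_quadMapDeriv_smul, integral_const_mul]

/-- The reflection `(x, y) ↦ (-y, -x)`. -/
def negSwap : ℝ × ℝ ≃ᵐ ℝ × ℝ := MeasurableEquiv.prodComm.trans (MeasurableEquiv.neg (ℝ × ℝ))

theorem measurePreserving_swap :
    MeasurePreserving (MeasurableEquiv.prodComm : ℝ × ℝ ≃ᵐ ℝ × ℝ) volume volume :=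
  Measure.measurePreserving_swap

theorem measurePreserving_negSwap : MeasurePreserving negSwap volume volume :=
  (Measure.measurePreserving_neg volume).comp measurePreserving_swap

theorem squareWeight_swap (W : ℝ × ℝ → ℝ) (q : ℝ × ℝ) :
    squareWeight W (MeasurableEquiv.prodComm q) = squareWeight W q := by
  have h_quadMap : quadMap (MeasurableEquiv.prodComm q) = quadMap q :=
    Prod.ext (mul_right_comm 2 q.2 q.1) (congrArg (· - 1) (add_comm (q.2 ^ 2) (q.1 ^ 2)))
  rw [squareWeight, squareWeight, h_quadMap, abs_sub_comm]
  rfl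

theorem squareWeight_negSwap (W : ℝ × ℝ → ℝ) (q : ℝ × ℝ) :
    squareWeight W (negSwap q) = squareWeight W q := by
  rw [← squareWeight_swap W q]
  simp [negSwap, squareWeight, quadMap]

theorem squareWeight_eq_zero {q : ℝ × ℝ} (hq : q.1 ^ 2 = q.2 ^ 2) : squareWeight W q = 0 := by
  rw [squareWeight, hq, sub_self, abs_zero, mul_zero]

theorem isOpen_triDom : IsOpen triDom :=
  (isOpen_lt (by fun_prop) (by fun_prop)).and
    ((isOpen_lt (by fun_prop) (by fun_prop)).and (isOpen_lt (by fun_prop) (by fun_prop)))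

theorem integrableOn_and_setIntegral_triDom_squareWeight
    (hW : IntegrableOn (squareWeight W) wedgeDom) :
    IntegrableOn (squareWeight W) triDom ∧
      ∫ q in triDom, squareWeight W q = 2 * ∫ q in wedgeDom, squareWeight W q := by
  have h_mem (q : ℝ × ℝ) :
      q ∈ negSwap ⁻¹' wedgeDom ↔ q.1 < -q.2 ∧ q.1 < q.2 ∧ -1 < q.1 := by
    change - -q.1 < -q.2 ∧ -q.2 < -q.1 ∧ -q.1 < 1 ↔ _
    rw [neg_neg, neg_lt_neg_iff, neg_lt]
  refine integrableOn_and_setIntegral_eq_two_smul_of_symmetric measurePreserving_negSwap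
    (squareWeight_negSwap W) isOpen_triDom.measurableSet isOpen_wedgeDom.measurableSet
    (Set.disjoint_left.2 fun q hq hq' => lt_asymm hq.1 ((h_mem q).1 hq').1)
    (Set.union_subset ?_ fun q hq => ?_) (fun q hq => squareWeight_eq_zero ?_) hW
  · rintro q ⟨h_neg, h_lt, h_one⟩
    exact ⟨by linarith, h_lt, h_one⟩
  · obtain ⟨h_neg, h_lt, h_one⟩ := (h_mem q).1 hq
    exact ⟨h_one, h_lt, by linarith⟩
  · obtain ⟨⟨h_left, h_lt, h_right⟩, hq⟩ := hq
    have h_eq : q.1 = -q.2 := le_antisymm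
      (not_lt.1 fun h => hq (Or.inl ⟨h, h_lt, h_right⟩))
      (not_lt.1 fun h => hq (Or.inr ((h_mem q).2 ⟨h, h_lt, h_left⟩)))
    rw [h_eq, neg_sq]

theorem integrableOn_and_setIntegral_sqDom_squareWeight
    (hW : IntegrableOn (squareWeight W) triDom) :
    IntegrableOn (squareWeight W) sqDom ∧
      ∫ q in sqDom, squareWeight W q = 2 * ∫ q in triDom, squareWeight W q := by
  have h_ae : sqDom =ᵐ[volume] Ioo (-1 : ℝ) 1 ×ˢ Ioo (-1 : ℝ) 1 :=
    (Measure.set_prod_ae_eq Ioo_ae_eq_Icc Ioo_ae_eq_Icc).symm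
  rw [integrableOn_congr_set_ae h_ae, setIntegral_congr_set h_ae]
  refine integrableOn_and_setIntegral_eq_two_smul_of_symmetric measurePreserving_swap
    (squareWeight_swap W) (measurableSet_Ioo.prod measurableSet_Ioo) isOpen_triDom.measurableSet
    (Set.disjoint_left.2 fun q hq hq' => lt_asymm hq.2.1 hq'.2.1)
    (Set.union_subset ?_ ?_) (fun q hq => squareWeight_eq_zero ?_) hW
  · rintro q ⟨h_left, h_lt, h_right⟩
    exact ⟨⟨h_left, h_lt.trans h_right⟩, h_left.trans h_lt, h_right⟩
  · rintro q ⟨h_left, h_lt, h_right⟩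
    exact ⟨⟨h_left.trans h_lt, h_right⟩, h_left, h_lt.trans h_right⟩
  · obtain ⟨⟨⟨h_left, h_right⟩, h_left', h_right'⟩, hq⟩ := hq
    have h_eq : q.1 = q.2 := le_antisymm
      (not_lt.1 fun h => hq (Or.inr ⟨h_left', h, h_right⟩))
      (not_lt.1 fun h => hq (Or.inl ⟨h_left, h, h_right'⟩))
    rw [h_eq]

theorem integrableOn_squareWeight (hW : IntegrableOn W omegaDom) :
    IntegrableOn (squareWeight W) sqDom :=
  (integrableOn_and_setIntegral_sqDom_squareWeight
    (integrableOn_and_setIntegral_triDom_squareWeight (integrableOn_wedgeDom_squareWeight hW)).1).1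

theorem setIntegral_squareWeight (hW : IntegrableOn W omegaDom) :
    ∫ q in sqDom, squareWeight W q = ∫ q in omegaDom, W q := by
  have h_tri :=
    integrableOn_and_setIntegral_triDom_squareWeight (integrableOn_wedgeDom_squareWeight hW)
  rw [(integrableOn_and_setIntegral_sqDom_squareWeight h_tri.1).2, h_tri.2,
    setIntegral_wedgeDom_squareWeight]
  ring

end ChangeOfVariables

section SquareFunctional

open MvPolynomial

variable {W : ℝ × ℝ → ℝ}

theorem evalP_quadSub (A : MvPolynomial (Fin 2) ℝ) (q : ℝ × ℝ) :
    evalP (quadSub A) q = evalP A (quadMap q) := by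
  rw [evalP, evalP, quadSub, ← aeval_eq_eval, ← aeval_eq_eval, comp_aeval_apply]
  congr 2
  exact funext (Fin.forall_fin_two.2 ⟨by simp [quadMap], by simp [quadMap]⟩)

theorem evalP_parityFactor (d : Bool × Bool) (q : ℝ × ℝ) :
    evalP (parityFactor d) q = (q.1 - q.2) ^ d.1.toNat * (q.1 + q.2) ^ d.2.toNat := by
  simp [evalP, parityFactor]

theorem evalP_quadSub_mul_squareWeight (A : MvPolynomial (Fin 2) ℝ) (q : ℝ × ℝ) :
    evalP (quadSub A) q * squareWeight W q = squareWeight (fun p => evalP A p * W p) q := by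
  rw [evalP_quadSub, squareWeight, squareWeight, mul_assoc]

theorem evalP_parityLift_mul_squareWeight (d : Bool × Bool) (A : MvPolynomial (Fin 2) ℝ)
    (q : ℝ × ℝ) : evalP (parityLift d A) q * squareWeight W q
      = evalP (parityFactor d) q * squareWeight (fun p => evalP A p * W p) q := by
  rw [parityLift_apply, evalP_mul, mul_assoc, evalP_quadSub_mul_squareWeight]

theorem preimage_negSwap_sqDom : negSwap ⁻¹' sqDom = sqDom := by
  ext q
  change (-q.2 ∈ Icc (-1) 1 ∧ -q.1 ∈ Icc (-1) 1) ↔ (q.1 ∈ Icc (-1 : ℝ) 1 ∧ q.2 ∈ Icc (-1 : ℝ) 1)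
  rw [neg_mem_Icc_iff, neg_mem_Icc_iff, neg_neg, and_comm]

theorem evalP_parityFactor_swap (j : Bool) (q : ℝ × ℝ) :
    evalP (parityFactor (true, j)) (MeasurableEquiv.prodComm q)
      = -evalP (parityFactor (true, j)) q := by
  rw [evalP_parityFactor, evalP_parityFactor]
  change (q.2 - q.1) ^ 1 * (q.2 + q.1) ^ j.toNat = -((q.1 - q.2) ^ 1 * (q.1 + q.2) ^ j.toNat)
  ring

theorem evalP_parityFactor_negSwap (q : ℝ × ℝ) :
    evalP (parityFactor (false, true)) (negSwap q) = -evalP (parityFactor (false, true)) q := by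
  rw [evalP_parityFactor, evalP_parityFactor]
  change (-q.2 - -q.1) ^ 0 * (-q.2 + -q.1) ^ 1 = -((q.1 - q.2) ^ 0 * (q.1 + q.2) ^ 1)
  ring

theorem setIntegral_evalP_parityFactor_mul_squareWeight {d : Bool × Bool} (hd : d ≠ ⊥)
    (W : ℝ × ℝ → ℝ) : ∫ q in sqDom, evalP (parityFactor d) q * squareWeight W q = 0 := by
  match d, hd with
  | (false, false), hd => exact absurd rfl hd
  | (false, true), _ =>
    refine setIntegral_eq_zero_of_antisymmetric measurePreserving_negSwap (fun q => ?_)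
      preimage_negSwap_sqDom
    rw [squareWeight_negSwap, evalP_parityFactor_negSwap, neg_mul]
  | (true, j), _ =>
    refine setIntegral_eq_zero_of_antisymmetric measurePreserving_swap (fun q => ?_)
      (preimage_swap_prod (Icc (-1) 1) (Icc (-1) 1))
    rw [squareWeight_swap, evalP_parityFactor_swap, neg_mul]

theorem isParityExtension_momentFunctional (h : HasMoments omegaDom W)
    (h' : HasMoments sqDom (squareWeight W)) :
    IsParityExtension (momentFunctional h) (momentFunctional h') where
  apply_quadSub A := by
    simp only [momentFunctional_apply, evalP_quadSub_mul_squareWeight]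
    exact setIntegral_squareWeight (h A)
  apply_parityLift d hd A := by
    simp only [momentFunctional_apply, evalP_parityLift_mul_squareWeight]
    exact setIntegral_evalP_parityFactor_mul_squareWeight hd _

end SquareFunctional

section SquareBasis

open MvPolynomial

theorem parityFactor_false_false : parityFactor (false, false) = 1 := parityFactor_bot

theorem parityFactor_false_true : parityFactor (false, true) = X 0 + X 1 := by simp [parityFactor]

theorem parityFactor_true_false : parityFactor (true, false) = X 0 - X 1 := by simp [parityFactor]

theorem parityFactor_true_true : parityFactor (true, true) = X 0 ^ 2 - X 1 ^ 2 := by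
  change (X 0 - X 1) ^ 1 * (X 0 + X 1) ^ 1 = _
  ring

theorem isOrthonormalPolynomialBasis_parityFunctional {W W' : ℝ × ℝ → ℝ} {e : Bool × Bool} {b : ℝ}
    (h : HasMoments omegaDom W)
    (hW' : ∀ q ∈ omegaDom, W' q = b ^ 2 * (evalP (parityWeight e) q * W q))
    {P : ℕ → ℕ → MvPolynomial (Fin 2) ℝ} (hP : ∀ n, isONBVn omegaDom W' n (P n)) (N : ℕ) :
    IsOrthonormalPolynomialBasis (parityFunctional (momentFunctional h) e) N (b • P (N - 1)) := by
  have h' : HasMoments omegaDom W' := hasMoments_of_eq_mul measurableSet_omegaDom hW' h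
  have h_basis := isOrthonormalPolynomialBasis_of_isONBVn h' hP N
  rw [momentFunctional_eq_of_eq_mul measurableSet_omegaDom hW' h h'] at h_basis
  exact h_basis.smul

theorem isONBVn_squareWeight {W₀ : ℝ × ℝ → ℝ} (hW₀ : IntegrableOn W₀ omegaDom)
    {W : Bool × Bool → ℝ × ℝ → ℝ} {b : Bool × Bool → ℝ}
    (hW : ∀ e, ∀ q ∈ omegaDom, W e q = b e ^ 2 * (evalP (parityWeight e) q * W₀ q))
    {P : Bool × Bool → ℕ → ℕ → MvPolynomial (Fin 2) ℝ}
    (hP : ∀ e n, isONBVn omegaDom (W e) n (P e n)) {e : Bool × Bool} {n N N' : ℕ}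
    (hN : 2 * N + parityDegree e = n + 2) (hN' : 2 * N' + parityDegree eᶜ = n + 2) :
    isONBVn sqDom (squareWeight W₀) n (fun k =>
      if k < N then b e • parityLift e (P e (N - 1) k)
      else b eᶜ • parityLift eᶜ (P eᶜ (N' - 1) (k - N))) := by
  have h : HasMoments omegaDom W₀ :=
    hasMoments_of_isBounded measurableSet_omegaDom isBounded_omegaDom hW₀
  have h' : HasMoments sqDom (squareWeight W₀) :=
    hasMoments_of_isBounded (measurableSet_Icc.prod measurableSet_Icc)
      ((Metric.isBounded_Icc _ _).prod (Metric.isBounded_Icc _ _)) (integrableOn_squareWeight hW₀)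
  have h_basis (e : Bool × Bool) (N : ℕ) :=
    isOrthonormalPolynomialBasis_parityFunctional h (hW e) (hP e) N
  simpa only [Pi.smul_apply, map_smul] using (isONBVn_iff h').2 <|
    (isParityExtension_momentFunctional h h').isOrthonormalPolynomialBasis
      (fun e => IsOrthonormalPolynomialBasis.isQuasiDefinite (h_basis e)) hN hN'
      (h_basis e N) (h_basis eᶜ N')

theorem stmt_6_general {W00 W11 W10 W01 : ℝ × ℝ → ℝ} {b11 b10 b01 : ℝ}
    (hW11 : ∀ q ∈ omegaDom,
      W11 q = b11 ^ 2 * ((1 - q.1 + q.2) * (1 + q.1 + q.2) * W00 q))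
    (hW10 : ∀ q ∈ omegaDom, W10 q = b10 ^ 2 * ((1 - q.1 + q.2) * W00 q))
    (hW01 : ∀ q ∈ omegaDom, W01 q = b01 ^ 2 * ((1 + q.1 + q.2) * W00 q))
    {P00 P11 P10 P01 : ℕ → ℕ → MvPolynomial (Fin 2) ℝ}
    (hP00 : ∀ n, isONBVn omegaDom W00 n (fun k => P00 k n))
    (hP11 : ∀ n, isONBVn omegaDom W11 n (fun k => P11 k n))
    (hP10 : ∀ n, isONBVn omegaDom W10 n (fun k => P10 k n))
    (hP01 : ∀ n, isONBVn omegaDom W01 n (fun k => P01 k n)) (n : ℕ) :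
    isONBVn sqDom (squareWeight W00) (2 * n) (fun k =>
        if k ≤ n then quadSub (P00 k n)
        else C b11 * ((X 0 ^ 2 - X 1 ^ 2) * quadSub (P11 (k - n - 1) (n - 1)))) ∧
      isONBVn sqDom (squareWeight W00) (2 * n + 1) (fun k =>
        if k ≤ n then C b01 * ((X 0 + X 1) * quadSub (P01 k n))
        else C b10 * ((X 0 - X 1) * quadSub (P10 (k - n - 1) n))) := by
  let W : Bool × Bool → ℝ × ℝ → ℝ
    | (false, false) => W00
    | (true, true) => W11
    | (true, false) => W10
    | (false, true) => W01
  let b : Bool × Bool → ℝ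
    | (false, false) => 1
    | (true, true) => b11
    | (true, false) => b10
    | (false, true) => b01
  let P : Bool × Bool → ℕ → ℕ → MvPolynomial (Fin 2) ℝ
    | (false, false) => fun n k => P00 k n
    | (true, true) => fun n k => P11 k n
    | (true, false) => fun n k => P10 k n
    | (false, true) => fun n k => P01 k n
  have hW : ∀ e, ∀ q ∈ omegaDom, W e q = b e ^ 2 * (evalP (parityWeight e) q * W00 q) := by
    rintro ⟨_ | _, _ | _⟩ q hq <;> simp [W, b, evalP, parityWeight, *]
  have hP : ∀ e n, isONBVn omegaDom (W e) n (P e n)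
    | (false, false) => hP00
    | (true, true) => hP11
    | (true, false) => hP10
    | (false, true) => hP01
  have hW00 := integrableOn_of_isONBVn (hP00 0)
  have h_even := isONBVn_squareWeight hW00 hW hP (e := (false, false)) (n := 2 * n) (N := n + 1)
    (N' := n) rfl rfl
  have h_odd := isONBVn_squareWeight hW00 hW hP (e := (false, true)) (n := 2 * n + 1)
    (N := n + 1) (N' := n + 1) rfl rfl
  have h_ff : (false, false)ᶜ = (true, true) := rfl
  have h_ft : (false, true)ᶜ = (true, false) := rfl
  simp only [h_ff, h_ft, Nat.lt_succ_iff, ← Nat.sub_sub, smul_eq_C_mul, parityLift_apply,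
    parityFactor_false_false, parityFactor_true_true, parityFactor_false_true,
    parityFactor_true_false, b, P, C_1, one_mul, Nat.add_sub_cancel] at h_even h_odd
  exact ⟨h_even, h_odd⟩

theorem mul_weight_eq_sqrt_div_sq_mul {a a₀ : ℝ} (ha : 0 < a) (ha₀ : 0 < a₀) (p p' w w' d : ℝ) :
    2 * a * (p * w) * (p' * w') * d = √(a / a₀) ^ 2 * (p * p' * (2 * a₀ * w * w' * d)) := by
  rw [Real.sq_sqrt (div_pos ha ha₀).le]
  field_simp

end SquareBasis

/-- the orthonormal bases of `V_{2n}(𝒲_γ)` and `V_{2n+1}(𝒲_γ)` on the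
square, built from orthonormal bases for the weights `W_γ` and `W_γ^{(i,j)}` on `Ω`. -/
theorem stmt_6
    (w : ℝ → ℝ) (hw0 : ∀ x, 0 ≤ w x)
    (hwi : IntegrableOn w (Icc (-1:ℝ) 1))
    (hw1 : (∫ x in Icc (-1:ℝ) 1, w x) = 1)
    (hwm : ∀ k : ℕ, IntegrableOn (fun x => x ^ k * w x) (Icc (-1:ℝ) 1))
    (γ : ℝ) (hγ : -1 < γ)
    (a00 a11 a10 a01 : ℝ)
    (ha00p : 0 < a00) (ha11p : 0 < a11) (ha10p : 0 < a10) (ha01p : 0 < a01)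
    (ha00 : (∫ q in sqDom, a00 * w q.1 * w q.2 * |q.1 - q.2| ^ (2*γ+1)) = 1)
    (ha11 : (∫ q in sqDom, a11 * ((1 - q.1) * (1 + q.1) * w q.1)
        * ((1 - q.2) * (1 + q.2) * w q.2) * |q.1 - q.2| ^ (2*γ+1)) = 1)
    (ha10 : (∫ q in sqDom, a10 * ((1 - q.1) * w q.1)
        * ((1 - q.2) * w q.2) * |q.1 - q.2| ^ (2*γ+1)) = 1)
    (ha01 : (∫ q in sqDom, a01 * ((1 + q.1) * w q.1)
        * ((1 + q.2) * w q.2) * |q.1 - q.2| ^ (2*γ+1)) = 1)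
    (W00 W11 W10 W01 : ℝ × ℝ → ℝ)
    (hW00 : ∀ q : ℝ × ℝ, W00 q
      = 2 * a00 * w (xRoot q) * w (yRoot q) * (q.1^2 - 4*q.2) ^ γ)
    (hW11 : ∀ q : ℝ × ℝ, W11 q
      = 2 * a11 * ((1 - xRoot q) * (1 + xRoot q) * w (xRoot q))
        * ((1 - yRoot q) * (1 + yRoot q) * w (yRoot q)) * (q.1^2 - 4*q.2) ^ γ)
    (hW10 : ∀ q : ℝ × ℝ, W10 q
      = 2 * a10 * ((1 - xRoot q) * w (xRoot q))
        * ((1 - yRoot q) * w (yRoot q)) * (q.1^2 - 4*q.2) ^ γ)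
    (hW01 : ∀ q : ℝ × ℝ, W01 q
      = 2 * a01 * ((1 + xRoot q) * w (xRoot q))
        * ((1 + yRoot q) * w (yRoot q)) * (q.1^2 - 4*q.2) ^ γ)
    (CW : ℝ × ℝ → ℝ)
    (hCW : ∀ q : ℝ × ℝ, CW q = W00 (2*q.1*q.2, q.1^2 + q.2^2 - 1) * |q.1^2 - q.2^2|)
    (P00 P11 P10 P01 : ℕ → ℕ → MvPolynomial (Fin 2) ℝ)
    (hP00 : ∀ n, isONBVn omegaDom W00 n (fun k => P00 k n))
    (hP11 : ∀ n, isONBVn omegaDom W11 n (fun k => P11 k n))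
    (hP10 : ∀ n, isONBVn omegaDom W10 n (fun k => P10 k n))
    (hP01 : ∀ n, isONBVn omegaDom W01 n (fun k => P01 k n)) :
    ∀ n : ℕ,
      isONBVn sqDom CW (2*n) (fun k =>
        if k ≤ n then quadSub (P00 k n)
        else MvPolynomial.C (Real.sqrt (a11 / a00)) *
          ((MvPolynomial.X 0 ^ 2 - MvPolynomial.X 1 ^ 2)
            * quadSub (P11 (k - n - 1) (n - 1)))) ∧
      isONBVn sqDom CW (2*n+1) (fun k =>
        if k ≤ n then MvPolynomial.C (Real.sqrt (a01 / a00)) *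
          ((MvPolynomial.X 0 + MvPolynomial.X 1) * quadSub (P01 k n))
        else MvPolynomial.C (Real.sqrt (a10 / a00)) *
          ((MvPolynomial.X 0 - MvPolynomial.X 1) * quadSub (P10 (k - n - 1) n))) := by
  obtain rfl : CW = squareWeight W00 := funext hCW
  refine stmt_6_general (fun q hq => ?_) (fun q hq => ?_) (fun q hq => ?_) hP00 hP11 hP10 hP01
  · rw [hW11, mul_weight_eq_sqrt_div_sq_mul ha11p ha00p, ← hW00, mul_mul_mul_comm (1 - xRoot q),
      one_sub_xRoot_mul_one_sub_yRoot hq, one_add_xRoot_mul_one_add_yRoot hq]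
  · rw [hW10, mul_weight_eq_sqrt_div_sq_mul ha10p ha00p, ← hW00,
      one_sub_xRoot_mul_one_sub_yRoot hq]
  · rw [hW01, mul_weight_eq_sqrt_div_sq_mul ha01p ha00p, ← hW00,
      one_add_xRoot_mul_one_add_yRoot hq]
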